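/- Let k ≥ 13 be an odd integer, let l, m be integers with k > l > m ≥ 2, and let N be a nonzero element of an algebraically closed field K of characteristic zero. Suppose γ₁, γ₂, γ₃, γ₄ ∈ K[t] are polynomials of degree at most 2, not all constant, satisfying γ₁(t)^k + γ₂(t)^l + γ₃(t)^m + γ₄(t)^k = N identically. Then at least one of the following polynomial identities holds: γ₁^k + γ₄^k = 0, or γ₂^l + γ₃^m = 0, or γ₁^k + γ₂^l + γ₄^k = 0, or γ₁^k + γ₃^m + γ₄^k = 0. -/

import Mathlib

open Polynomial

/-!
Let `S` be the set of those `j` for which `γⱼ` is nonconstant, and suppose that the powers indexed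
by `S` sum to a nonzero constant. Choose linearly independent powers `γⱼ ^ pⱼ`, `j ∈ T ⊆ S`, having
this constant as a linear combination with nonzero coefficients, and put `r = #T`. Their Wronskian
is nonzero, and Cramer's rule turns it into a determinant with one column made up of the
derivatives of the constant; since `γⱼ ^ (pⱼ - (r - 1))` divides the `j`-th column, comparing
degrees gives `pⱼ deg γⱼ + r (r - 1) / 2 ≤ (r - 1) ∑_{i ∈ T} deg γᵢ` for every `j ∈ T`. Exponents
as large as those of the theorem and degrees at most `2` violate this for each `r ≤ 4`, so the
nonconstant powers sum to zero. Finally, when `γ₁` is nonconstant, `k deg γ₁` differs from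
`l deg γ₂` and from `m deg γ₃` because `k` is odd and larger than `l` and `m`; hence `γ₁` and `γ₄`
are constant or nonconstant together.
-/

section Wronskian

/-- The Wronskian matrix of a tuple of polynomials, with the `i`-th derivatives in row `i`. Its
determinant is the Wronskian of the tuple, generalizing `Polynomial.wronskian`. -/
noncomputable def wronskianMatrix {R : Type*} [Semiring R] {n : ℕ} (f : Fin n → R[X]) :
    Matrix (Fin n) (Fin n) R[X] :=
  Matrix.of fun i j ↦ derivative^[i] (f j)

theorem wronskian_mul_mul_left {R : Type*} [CommRing R] (d f g : R[X]) :
    wronskian (d * f) (d * g) = d ^ 2 * wronskian f g := by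
  simp only [wronskian, derivative_mul]
  ring

theorem sum_derivative_mul_iterate_derivative_eq_zero {R ι : Type*} [CommRing R] [Fintype ι]
    {f v : ι → R[X]} {i : ℕ} (h : ∑ j, derivative^[i] (f j) * v j = 0)
    (h' : ∑ j, derivative^[i + 1] (f j) * v j = 0) :
    ∑ j, derivative^[i] (f j) * derivative (v j) = 0 := by
  have hderiv := congrArg derivative h
  simpa only [derivative_sum, derivative_mul, ← Function.iterate_succ_apply' derivative,
    Finset.sum_add_distrib, h', zero_add, derivative_zero] using hderiv

theorem eq_zero_of_det_wronskianMatrix_tail_ne_zero {R : Type*} [CommRing R] [IsDomain R] {n : ℕ}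
    {f v : Fin (n + 1) → R[X]} (hf : (wronskianMatrix (Fin.tail f)).det ≠ 0)
    (hv : ∀ i < n, ∑ j, derivative^[i] (f j) * v j = 0) (hv₀ : v 0 = 0) : v = 0 := by
  have htail : Fin.tail v = 0 := by
    refine Matrix.eq_zero_of_mulVec_eq_zero hf (funext fun i ↦ ?_)
    simpa [Fin.sum_univ_succ, hv₀, Matrix.mulVec, dotProduct, wronskianMatrix, Fin.tail]
      using hv i i.isLt
  funext j
  exact Fin.cases hv₀ (congrFun htail) j

variable {K : Type*} [Field K] [CharZero K]

theorem exists_eq_C_mul_of_wronskian_eq_zero {f g : K[X]} (hf : f ≠ 0) (h : wronskian f g = 0) :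
    ∃ c : K, g = C c * f := by
  classical
  let _ := EuclideanDomain.gcdMonoid K[X]
  obtain ⟨u, v, hu, hv, hunit⟩ := extract_gcd f g
  set d := gcd f g
  have hd : d ≠ 0 := left_ne_zero_of_mul (hu ▸ hf)
  have hw : wronskian u v = 0 := by
    rw [hu, hv, wronskian_mul_mul_left] at h
    exact (mul_eq_zero_iff_left (pow_ne_zero 2 hd)).mp h
  obtain ⟨hu', hv'⟩ := ((gcd_isUnit_iff u v).mp hunit).wronskian_eq_zero_iff.mp hw
  obtain ⟨a, ha⟩ := natDegree_eq_zero.mp (derivative_eq_zero.mp hu')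
  obtain ⟨b, hb⟩ := natDegree_eq_zero.mp (derivative_eq_zero.mp hv')
  have ha₀ : a ≠ 0 := by
    rintro rfl
    exact hf (by rw [hu, ← ha, C_0, mul_zero])
  refine ⟨b / a, ?_⟩
  rw [hv, hu, ← ha, ← hb, mul_left_comm, ← C_mul, div_mul_cancel₀ b ha₀]

theorem det_wronskianMatrix_ne_zero {n : ℕ} {f : Fin n → K[X]} (hf : LinearIndependent K f) :
    (wronskianMatrix f).det ≠ 0 := by
  induction n with
  | zero => simp
  | succ n ih =>
    have htail : (wronskianMatrix (Fin.tail f)).det ≠ 0 :=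
      ih (hf.comp Fin.succ (Fin.succ_injective n))
    intro hdet
    obtain ⟨v, hv_ne, hv⟩ := Matrix.exists_mulVec_eq_zero_iff.mpr hdet
    replace hv (i : ℕ) (hi : i < n + 1) : ∑ j, derivative^[i] (f j) * v j = 0 :=
      congrFun hv ⟨i, hi⟩
    have hv₀ : v 0 ≠ 0 := fun h ↦ hv_ne <|
      eq_zero_of_det_wronskianMatrix_tail_ne_zero htail (fun i hi ↦ hv i (by omega)) h
    have hwronskian : (fun j ↦ wronskian (v 0) (v j)) = 0 := by
      refine eq_zero_of_det_wronskianMatrix_tail_ne_zero htail (fun i hi ↦ ?_)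
        (wronskian_self_eq_zero _)
      have hderiv := sum_derivative_mul_iterate_derivative_eq_zero (hv i (by omega))
        (hv (i + 1) (by omega))
      calc ∑ j, derivative^[i] (f j) * wronskian (v 0) (v j)
          = v 0 * ∑ j, derivative^[i] (f j) * derivative (v j)
            - derivative (v 0) * ∑ j, derivative^[i] (f j) * v j := by
            simp only [Finset.mul_sum, ← Finset.sum_sub_distrib, wronskian]
            exact Finset.sum_congr rfl fun j _ ↦ by ring
        _ = 0 := by rw [hderiv, hv i (by omega), mul_zero, mul_zero, sub_zero]
    choose c hc using fun j ↦
      exists_eq_C_mul_of_wronskian_eq_zero hv₀ (congrFun hwronskian j)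
    have hrel : ∑ j, c j • f j = 0 := by
      refine (mul_eq_zero_iff_left hv₀).mp ?_
      rw [← hv 0 (by omega), Finset.mul_sum]
      refine Finset.sum_congr rfl fun j _ ↦ ?_
      rw [hc j, smul_eq_C_mul, Function.iterate_zero_apply]
      ring
    have hc₀ : c 0 = 0 := Fintype.linearIndependent_iff.mp hf c hrel 0
    exact hv₀ (by rw [hc 0, hc₀, C_0, zero_mul])

end Wronskian

section DegreeBounds

theorem degree_det_add_sum_le {R ι : Type*} [CommRing R] [Fintype ι] [DecidableEq ι]
    {A : Matrix ι ι R[X]} {a b : ι → ℕ} (h : ∀ i j, (A i j).degree + a i ≤ b j) :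
    A.det.degree + ∑ i, (a i : WithBot ℕ) ≤ ∑ j, (b j : WithBot ℕ) := by
  rw [Matrix.det_apply]
  refine Finset.sum_induction _
    (fun q : R[X] ↦ q.degree + ∑ i, (a i : WithBot ℕ) ≤ ∑ j, (b j : WithBot ℕ)) (fun p q hp hq ↦ ?_)
    (by simp) fun σ _ ↦ ?_
  · rcases max_choice p.degree q.degree with hmax | hmax
    · exact (add_le_add_left ((degree_add_le p q).trans_eq hmax) _).trans hp
    · exact (add_le_add_left ((degree_add_le p q).trans_eq hmax) _).trans hq
  · calc (Equiv.Perm.sign σ • ∏ j, A (σ j) j).degree + ∑ i, (a i : WithBot ℕ)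
        ≤ ∑ j, (A (σ j) j).degree + ∑ j, (a (σ j) : WithBot ℕ) := by
          rw [Equiv.sum_comp σ fun i ↦ (a i : WithBot ℕ)]
          gcongr
          exact (degree_smul_le _ _).trans (degree_prod_le _ _)
      _ = ∑ j, ((A (σ j) j).degree + a (σ j)) := Finset.sum_add_distrib.symm
      _ ≤ ∑ j, (b j : WithBot ℕ) := Finset.sum_le_sum fun j _ ↦ h (σ j) j

theorem degree_mul_det_add_sum_le {R ι : Type*} [CommRing R] [Fintype ι] [DecidableEq ι]
    {A : Matrix ι ι R[X]} {g : ι → R[X]} {a b : ι → ℕ} (hA : ∀ i j, (A i j).degree + a i ≤ b j)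
    (hAg : ∀ i, ((A.mulVec g) i).degree + a i ≤ 0) (j₀ : ι) :
    (g j₀ * A.det).degree + ∑ i, (a i : WithBot ℕ) + b j₀ ≤ ∑ j, (b j : WithBot ℕ) := by
  have hcramer : (A.updateCol j₀ (A.mulVec g)).det = g j₀ * A.det := by
    have hmulVec : A.mulVec g = fun i ↦ ∑ j, g j • A i j :=
      funext fun i ↦ by simp only [Matrix.mulVec, dotProduct, smul_eq_mul, mul_comm]
    rw [hmulVec, Matrix.det_updateCol_sum, smul_eq_mul]
  have hentry (i j : ι) : (A.updateCol j₀ (A.mulVec g) i j).degree + a i ≤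
      (Function.update b j₀ 0 j : ℕ) := by
    rcases eq_or_ne j j₀ with rfl | hj
    · simpa using hAg i
    · simpa only [Matrix.updateCol_ne hj, Function.update_of_ne hj] using hA i j
  have hb : ∑ j, Function.update b j₀ 0 j + b j₀ = ∑ j, b j := by
    rw [Finset.sum_update_of_mem (Finset.mem_univ j₀), zero_add, ← Finset.erase_eq,
      Finset.sum_erase_add _ _ (Finset.mem_univ j₀)]
  have hdet := add_le_add_left (degree_det_add_sum_le hentry) (b j₀ : WithBot ℕ)
  rw [hcramer] at hdet
  exact hdet.trans_eq (by exact_mod_cast hb)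

theorem degree_iterate_derivative_C_add_le {R : Type*} [Semiring R] (a : R) (i : ℕ) :
    (derivative^[i] (C a)).degree + i ≤ 0 := by
  rcases Nat.eq_zero_or_pos i with rfl | hi
  · simp [degree_C_le]
  · simp [iterate_derivative_C hi]

theorem exists_iterate_derivative_pow_eq_pow_mul {R : Type*} [CommRing R] [NoZeroDivisors R]
    (P : R[X]) (p : ℕ) {i e : ℕ} (hi : i ≤ e) :
    ∃ u : R[X], derivative^[i] (P ^ p) = P ^ (p - e) * u ∧
      u.degree + i ≤ (e * P.natDegree : ℕ) := by
  obtain ⟨u, hu⟩ : P ^ (p - e) ∣ derivative^[i] (P ^ p) :=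
    (pow_dvd_pow P (by omega)).trans (pow_sub_dvd_iterate_derivative_pow P p i)
  by_cases hzero : derivative^[i] (P ^ p) = 0
  · exact ⟨0, by rw [hzero, mul_zero], by simp⟩
  refine ⟨u, hu, ?_⟩
  have hi_le : i ≤ (P ^ p).natDegree :=
    not_lt.mp fun hlt ↦ hzero (iterate_derivative_eq_zero hlt)
  have hdeg := natDegree_iterate_derivative (P ^ p) i
  rw [hu] at hzero
  rw [hu, natDegree_mul (left_ne_zero_of_mul hzero) (right_ne_zero_of_mul hzero), natDegree_pow]
    at hdeg
  have hsplit : (P ^ p).natDegree ≤ (p - e) * P.natDegree + e * P.natDegree := by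
    rw [natDegree_pow, ← add_mul]
    gcongr
    omega
  rw [degree_eq_natDegree (right_ne_zero_of_mul hzero)]
  norm_cast
  omega

variable {K : Type*} [Field K] [CharZero K]

theorem natDegree_pow_add_choose_two_le_of_linearIndependent {n : ℕ} {P : Fin n → K[X]}
    {p : Fin n → ℕ} {c : Fin n → K} {M : K} (hli : LinearIndependent K fun j ↦ P j ^ p j)
    (hsum : ∑ j, c j • P j ^ p j = C M) {j₀ : Fin n} (hc : c j₀ ≠ 0) :
    (P j₀ ^ p j₀).natDegree + n.choose 2 ≤ (n - 1) * ∑ j, (P j).natDegree := by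
  choose u hu hu_deg using fun i j : Fin n ↦
    exists_iterate_derivative_pow_eq_pow_mul (P j) (p j) (Nat.le_sub_one_of_lt i.isLt)
  let U : Matrix (Fin n) (Fin n) K[X] := Matrix.of u
  let Q (j : Fin n) : K[X] := P j ^ (p j - (n - 1))
  have hne : (∏ j, Q j) * U.det ≠ 0 := by
    have hfactor : wronskianMatrix (fun j ↦ P j ^ p j) = Matrix.of fun i j ↦ Q j * U i j :=
      Matrix.ext hu
    rw [← Matrix.det_mul_row, ← hfactor]
    exact det_wronskianMatrix_ne_zero hli
  have hrow (i : Fin n) :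
      (U.mulVec fun j ↦ C (c j) * Q j) i = derivative^[i] (C M) := by
    rw [← hsum, iterate_derivative_sum, Matrix.mulVec, dotProduct]
    refine Finset.sum_congr rfl fun j _ ↦ ?_
    rw [smul_eq_C_mul, iterate_derivative_C_mul, hu]
    simp only [U, Q, Matrix.of_apply]
    ring
  have hU : U.det ≠ 0 := right_ne_zero_of_mul hne
  have hQ : Q j₀ ≠ 0 := Finset.prod_ne_zero_iff.mp (left_ne_zero_of_mul hne) j₀ (Finset.mem_univ _)
  have hcramer := degree_mul_det_add_sum_le (A := U) hu_deg
    (fun i ↦ by rw [hrow]; exact degree_iterate_derivative_C_add_le M i) j₀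
  have hrows : ∑ i : Fin n, (i : ℕ) = n.choose 2 := by
    rw [Fin.sum_univ_eq_sum_range fun i ↦ i, Finset.sum_range_id, Nat.choose_two_right]
  have hdeg : (P j₀ ^ (p j₀ - (n - 1))).natDegree ≤ (C (c j₀) * Q j₀ * U.det).natDegree := by
    rw [natDegree_mul (mul_ne_zero (C_ne_zero.mpr hc) hQ) hU, natDegree_C_mul hc]
    exact Nat.le_add_right _ _
  rw [degree_eq_natDegree (mul_ne_zero (mul_ne_zero (C_ne_zero.mpr hc) hQ) hU)] at hcramer
  norm_cast at hcramer
  rw [hrows, ← Finset.mul_sum] at hcramer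
  have hpow : (P j₀ ^ p j₀).natDegree ≤
      (P j₀ ^ (p j₀ - (n - 1))).natDegree + (n - 1) * (P j₀).natDegree := by
    rw [natDegree_pow, natDegree_pow, ← add_mul]
    gcongr
    omega
  omega

theorem exists_linearIndepOn_sum_smul_eq {k V ι : Type*} [DivisionRing k] [AddCommGroup V]
    [Module k V] {f : ι → V} {s : Set ι} {x : V} (hx : x ∈ Submodule.span k (f '' s)) :
    ∃ t : Finset ι, (t : Set ι) ⊆ s ∧ LinearIndepOn k f (t : Set ι) ∧
      ∃ c : ι → k, (∀ j ∈ t, c j ≠ 0) ∧ ∑ j ∈ t, c j • f j = x := by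
  obtain ⟨b, hbs, -, hspan, hli⟩ :=
    exists_linearIndepOn_extension (linearIndepOn_empty k f) (Set.empty_subset s)
  obtain ⟨c, hcb, hc⟩ := (Finsupp.mem_span_image_iff_linearCombination k).mp
    (Submodule.span_le.mpr hspan hx)
  exact ⟨c.support, fun j hj ↦ hbs (hcb hj), hli.mono hcb, c,
    fun j hj ↦ Finsupp.mem_support_iff.mp hj, hc⟩

theorem natDegree_pow_add_choose_two_le_of_linearIndepOn {ι : Type*} {t : Finset ι} {P : ι → K[X]}
    {p : ι → ℕ} {c : ι → K} {M : K} (hli : LinearIndepOn K (fun j ↦ P j ^ p j) (t : Set ι))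
    (hsum : ∑ j ∈ t, c j • P j ^ p j = C M) {j₀ : ι} (hj₀ : j₀ ∈ t) (hc : c j₀ ≠ 0) :
    (P j₀ ^ p j₀).natDegree + t.card.choose 2 ≤ (t.card - 1) * ∑ j ∈ t, (P j).natDegree := by
  let e := t.equivFin
  have hsum' : ∑ i, c (e.symm i) • P (e.symm i) ^ p (e.symm i) = C M := by
    rw [Equiv.sum_comp e.symm fun j ↦ c j • P j ^ p j, t.sum_coe_sort fun j ↦ c j • P j ^ p j, hsum]
  have hdeg : ∑ i, (P (e.symm i)).natDegree = ∑ j ∈ t, (P j).natDegree := by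
    rw [Equiv.sum_comp e.symm fun j ↦ (P j).natDegree, t.sum_coe_sort fun j ↦ (P j).natDegree]
  have hbound := natDegree_pow_add_choose_two_le_of_linearIndependent (j₀ := e ⟨j₀, hj₀⟩)
    (hli.comp e.symm e.symm.injective) hsum' (by simpa only [e.symm_apply_apply] using hc)
  rwa [hdeg, e.symm_apply_apply] at hbound

theorem exists_subset_natDegree_pow_add_choose_two_le {ι : Type*} {s : Finset ι} {P : ι → K[X]}
    {p : ι → ℕ} {M : K} (hM : M ≠ 0) (hsum : ∑ j ∈ s, P j ^ p j = C M) :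
    ∃ t ⊆ s, t.Nonempty ∧ ∀ j ∈ t,
      (P j ^ p j).natDegree + t.card.choose 2 ≤ (t.card - 1) * ∑ i ∈ t, (P i).natDegree := by
  have hmem : C M ∈ Submodule.span K ((fun j ↦ P j ^ p j) '' s) := hsum ▸
    sum_mem fun j hj ↦ Submodule.subset_span (Set.mem_image_of_mem _ hj)
  obtain ⟨t, hts, hli, c, hc, hct⟩ := exists_linearIndepOn_sum_smul_eq hmem
  refine ⟨t, Finset.coe_subset.mp hts, Finset.nonempty_iff_ne_empty.mpr fun ht ↦ hM ?_, fun j hj ↦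
    natDegree_pow_add_choose_two_le_of_linearIndepOn hli hct hj (hc j hj)⟩
  rw [ht, Finset.sum_empty] at hct
  exact C_eq_zero.mp hct.symm

end DegreeBounds

section FourPowers

theorem two_lt_card_of_mul_add_choose_two_le {ι : Type*} {d p : ι → ℕ} {t : Finset ι}
    (ht : t.Nonempty) (hd : ∀ j ∈ t, d j ≠ 0) (hp : ∀ j ∈ t, 2 ≤ p j)
    (hbound : ∀ j ∈ t, p j * d j + t.card.choose 2 ≤ (t.card - 1) * ∑ i ∈ t, d i) :
    2 < t.card := by
  by_contra! hcard_le
  have hsum_pos : 0 < ∑ i ∈ t, d i :=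
    Finset.sum_pos (fun j hj ↦ Nat.pos_of_ne_zero (hd j hj)) ht
  have hsum_bound := calc
    2 * ∑ j ∈ t, d j + t.card * t.card.choose 2 = ∑ j ∈ t, (2 * d j + t.card.choose 2) := by
        rw [Finset.mul_sum, Finset.sum_add_distrib, Finset.sum_const, smul_eq_mul]
    _ ≤ ∑ j ∈ t, (p j * d j + t.card.choose 2) := by
        gcongr with j hj
        exact hp j hj
    _ ≤ t.card * ((t.card - 1) * ∑ i ∈ t, d i) := Finset.sum_le_card_nsmul _ _ _ hbound
  have hcard_pos := ht.card_pos
  obtain hcard | hcard : t.card = 1 ∨ t.card = 2 := by omega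
  · rw [hcard, Nat.sub_self, zero_mul, mul_zero] at hsum_bound
    omega
  · rw [hcard, Nat.choose_self] at hsum_bound
    omega

theorem exists_lt_mul_add_choose_two {d p : Fin 4 → ℕ} {t : Finset (Fin 4)} (ht : t.Nonempty)
    (hd₀ : ∀ j ∈ t, d j ≠ 0) (hd : ∀ j, d j ≤ 2) (hp : ∀ j, 2 ≤ p j) (hp₀ : 13 ≤ p 0)
    (hp₃ : 13 ≤ p 3) :
    ∃ j ∈ t, (t.card - 1) * ∑ i ∈ t, d i < p j * d j + t.card.choose 2 := by
  by_contra! hbound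
  have hbig {j : Fin 4} (hpj : 13 ≤ p j) : 13 * d j ≤ p j * d j := Nat.mul_le_mul_right _ hpj
  have hcard_gt := two_lt_card_of_mul_add_choose_two_le ht hd₀ (fun j _ ↦ hp j) hbound
  have hcard_le : t.card ≤ 4 := t.card_le_univ
  obtain hcard | hcard : t.card = 3 ∨ t.card = 4 := by omega
  · obtain ⟨j, hj, hpj⟩ : ∃ j ∈ t, 13 ≤ p j := by
      have hmem : ∀ t : Finset (Fin 4), t.card = 3 → 0 ∈ t ∨ 3 ∈ t := by decide
      rcases hmem t hcard with h | h
      exacts [⟨0, h, hp₀⟩, ⟨3, h, hp₃⟩]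
    have hrest : ∑ i ∈ t.erase j, d i ≤ 4 := by
      refine (Finset.sum_le_card_nsmul _ _ 2 fun i _ ↦ hd i).trans_eq ?_
      rw [Finset.card_erase_of_mem hj, hcard, smul_eq_mul]
    have hj_bound := hbound j hj
    rw [hcard, ← Finset.sum_erase_add _ _ hj, show Nat.choose 3 2 = 3 from rfl] at hj_bound
    have := hbig hpj
    have := hd₀ j hj
    omega
  · obtain rfl : t = Finset.univ := Finset.eq_univ_of_card t hcard
    have hbound₀ := hbound 0 (Finset.mem_univ 0)
    have hbound₃ := hbound 3 (Finset.mem_univ 3)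
    rw [hcard, Fin.sum_univ_four, show Nat.choose 4 2 = 6 from rfl] at hbound₀ hbound₃
    -- Adding both bounds gives `7 * (d 0 + d 3) ≤ 12`: this is the step that needs exponent `13`.
    have := hbig hp₀
    have := hbig hp₃
    have := hd₀ 0 (Finset.mem_univ 0)
    have := hd₀ 3 (Finset.mem_univ 3)
    have := hd 1
    have := hd 2
    omega

variable {K : Type*} [Field K] [CharZero K]

theorem sum_nonconstant_pow_eq_zero {P : Fin 4 → K[X]} {p : Fin 4 → ℕ}
    (hdeg : ∀ j, (P j).natDegree ≤ 2) (hp : ∀ j, 2 ≤ p j) (hp₀ : 13 ≤ p 0) (hp₃ : 13 ≤ p 3)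
    (hsum : (∑ j, P j ^ p j).natDegree = 0) :
    ∑ j with (P j).natDegree ≠ 0, P j ^ p j = 0 := by
  have hconst : (∑ j with ¬ (P j).natDegree ≠ 0, P j ^ p j).natDegree ≤ 0 := by
    refine natDegree_sum_le_of_forall_le _ _ fun j hj ↦ ?_
    rw [natDegree_pow, not_not.mp (Finset.mem_filter.mp hj).2, mul_zero]
  have hsplit := Finset.sum_filter_add_sum_filter_not Finset.univ
    (fun j ↦ (P j).natDegree ≠ 0) fun j ↦ P j ^ p j
  obtain ⟨M, hM⟩ : ∃ M, C M = ∑ j with (P j).natDegree ≠ 0, P j ^ p j := by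
    rw [← natDegree_eq_zero, ← Nat.le_zero, eq_sub_of_add_eq hsplit]
    exact natDegree_sub_le_of_le hsum.le hconst
  by_contra hne
  rw [← hM, C_eq_zero] at hne
  obtain ⟨t, hts, ht, hbound⟩ := exists_subset_natDegree_pow_add_choose_two_le hne hM.symm
  obtain ⟨j, hj, hlt⟩ := exists_lt_mul_add_choose_two ht
    (fun j hj ↦ (Finset.mem_filter.mp (hts hj)).2) hdeg hp hp₀ hp₃
  exact (hbound j hj).not_gt (by rwa [natDegree_pow])

end FourPowers

section OddExponent

theorem natDegree_le_max_of_natDegree_add_add_eq_zero {R : Type*} [Ring R] {f g h : R[X]}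
    (hfgh : (f + g + h).natDegree = 0) : f.natDegree ≤ max g.natDegree h.natDegree := by
  calc f.natDegree = (f + g + h - (g + h)).natDegree := by rw [add_assoc, add_sub_cancel_right]
    _ ≤ max (f + g + h).natDegree (g + h).natDegree := natDegree_sub_le _ _
    _ = (g + h).natDegree := by rw [hfgh, Nat.zero_max]
    _ ≤ max g.natDegree h.natDegree := natDegree_add_le g h

theorem natDegree_pow_ne_natDegree_pow_of_odd {R : Type*} [Semiring R] [NoZeroDivisors R]
    {k l : ℕ} (hk : Odd k) (hkl : l < k) {P Q : R[X]} (hP : P.natDegree ≤ 2)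
    (hQ : Q.natDegree ≤ 2) (hP₀ : P.natDegree ≠ 0) :
    (P ^ k).natDegree ≠ (Q ^ l).natDegree := by
  rw [natDegree_pow, natDegree_pow]
  obtain ⟨j, rfl⟩ := hk
  generalize P.natDegree = a at *
  generalize Q.natDegree = b at *
  interval_cases a <;> interval_cases b <;> omega

variable {R : Type*} [CommRing R] [NoZeroDivisors R]

theorem natDegree_eq_zero_of_natDegree_add_pow_eq_zero {k l m : ℕ} (hk : Odd k) (hkl : l < k)
    (hlm : m < l) {P Q S : R[X]} (hP : P.natDegree ≤ 2) (hQ : Q.natDegree ≤ 2)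
    (hS : S.natDegree ≤ 2) (h : (P ^ k + Q ^ l + S ^ m).natDegree = 0) : P.natDegree = 0 := by
  by_contra hP₀
  have hPQ := natDegree_pow_ne_natDegree_pow_of_odd hk hkl hP hQ hP₀
  have hPS := natDegree_pow_ne_natDegree_pow_of_odd hk (hlm.trans hkl) hP hS hP₀
  have hP_le := natDegree_le_max_of_natDegree_add_add_eq_zero h
  have hQ_le : (Q ^ l).natDegree ≤ max (P ^ k).natDegree (S ^ m).natDegree :=
    natDegree_le_max_of_natDegree_add_add_eq_zero (by rwa [add_comm (Q ^ l)])
  have hS_le : (S ^ m).natDegree ≤ max (P ^ k).natDegree (Q ^ l).natDegree :=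
    natDegree_le_max_of_natDegree_add_add_eq_zero (by rwa [add_assoc, add_comm])
  obtain ⟨hQS, hlt⟩ : (Q ^ l).natDegree = (S ^ m).natDegree ∧
      (P ^ k).natDegree < (Q ^ l).natDegree := by omega
  have hk_le : k ≤ (P ^ k).natDegree := by
    rw [natDegree_pow]
    exact Nat.le_mul_of_pos_right k (Nat.pos_of_ne_zero hP₀)
  rw [natDegree_pow Q] at hQS hlt
  rw [natDegree_pow] at hQS
  generalize Q.natDegree = b at *
  generalize S.natDegree = c at *
  interval_cases b <;> interval_cases c <;> omega

theorem natDegree_eq_zero_iff_of_add_pow_eq_C {k l m : ℕ} (hk : Odd k) (hkl : l < k) (hlm : m < l)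
    {P Q S T : R[X]} (hP : P.natDegree ≤ 2) (hQ : Q.natDegree ≤ 2) (hS : S.natDegree ≤ 2)
    (hT : T.natDegree ≤ 2) {N : R} (h : P ^ k + Q ^ l + S ^ m + T ^ k = C N) :
    P.natDegree = 0 ↔ T.natDegree = 0 := by
  have hconst {F : R[X]} (hF : F.natDegree = 0) : (C N - F ^ k).natDegree = 0 :=
    Nat.le_zero.mp (natDegree_sub_le_of_le (natDegree_C N).le (by simp [hF]))
  refine ⟨fun hP₀ ↦ ?_, fun hT₀ ↦ ?_⟩
  · refine natDegree_eq_zero_of_natDegree_add_pow_eq_zero hk hkl hlm hT hQ hS ?_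
    rw [show T ^ k + Q ^ l + S ^ m = C N - P ^ k by rw [← h]; ring, hconst hP₀]
  · refine natDegree_eq_zero_of_natDegree_add_pow_eq_zero hk hkl hlm hP hQ hS ?_
    rw [eq_sub_of_add_eq h, hconst hT₀]

end OddExponent

theorem lines_conics_in_subvarieties_general
    {K : Type*} [Field K] [CharZero K]
    (k l m : ℕ) (hk13 : 13 ≤ k) (hkodd : Odd k) (hkl : l < k) (hlm : m < l) (hm : 2 ≤ m)
    (N : K) (hN : N ≠ 0)
    (γ₁ γ₂ γ₃ γ₄ : K[X])
    (hd₁ : γ₁.natDegree ≤ 2) (hd₂ : γ₂.natDegree ≤ 2)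
    (hd₃ : γ₃.natDegree ≤ 2) (hd₄ : γ₄.natDegree ≤ 2)
    (hnc : 0 < γ₁.natDegree ∨ 0 < γ₂.natDegree ∨ 0 < γ₃.natDegree ∨ 0 < γ₄.natDegree)
    (heq : γ₁ ^ k + γ₂ ^ l + γ₃ ^ m + γ₄ ^ k = C N) :
    γ₁ ^ k + γ₄ ^ k = 0 ∨ γ₂ ^ l + γ₃ ^ m = 0 ∨
    γ₁ ^ k + γ₂ ^ l + γ₄ ^ k = 0 ∨ γ₁ ^ k + γ₃ ^ m + γ₄ ^ k = 0 := by
  have hsum : ∑ j with (![γ₁, γ₂, γ₃, γ₄] j).natDegree ≠ 0,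
      ![γ₁, γ₂, γ₃, γ₄] j ^ ![k, l, m, k] j = 0 := by
    refine sum_nonconstant_pow_eq_zero (fun j ↦ ?_) (fun j ↦ ?_) hk13 hk13 ?_
    · fin_cases j <;> assumption
    · have hl : 2 ≤ l := hm.trans hlm.le
      have hk : 2 ≤ k := hl.trans hkl.le
      fin_cases j <;> assumption
    · simp [Fin.sum_univ_four, heq]
  have h₁₄ := natDegree_eq_zero_iff_of_add_pow_eq_C hkodd hkl hlm hd₁ hd₂ hd₃ hd₄ heq
  simp only [ne_eq, Finset.sum_filter, ite_not, Fin.sum_univ_four, Matrix.cons_val] at hsum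
  by_cases h₁ : γ₁.natDegree = 0
  · have h₂₃ : γ₂ ^ l + γ₃ ^ m = 0 := by
      by_cases h₂ : γ₂.natDegree = 0 <;> by_cases h₃ : γ₃.natDegree = 0 <;> simp_all
    exact .inr (.inl h₂₃)
  · simp only [h₁, h₁₄.not.mp h₁, if_false] at hsum
    by_cases h₂ : γ₂.natDegree = 0 <;> by_cases h₃ : γ₃.natDegree = 0
    · exact .inl (by simpa [h₂, h₃] using hsum)
    · exact .inr (.inr (.inr (by simpa [h₂, h₃] using hsum)))
    · exact .inr (.inr (.inl (by simpa [h₂, h₃] using hsum)))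
    · exact absurd (by simpa [h₂, h₃, heq] using hsum) hN

theorem lines_conics_in_subvarieties
    {K : Type*} [Field K] [IsAlgClosed K] [CharZero K]
    (k l m : ℕ) (hk13 : 13 ≤ k) (hkodd : Odd k) (hkl : l < k) (hlm : m < l) (hm : 2 ≤ m)
    (N : K) (hN : N ≠ 0)
    (γ₁ γ₂ γ₃ γ₄ : K[X])
    (hd₁ : γ₁.natDegree ≤ 2) (hd₂ : γ₂.natDegree ≤ 2)
    (hd₃ : γ₃.natDegree ≤ 2) (hd₄ : γ₄.natDegree ≤ 2)
    (hnc : 0 < γ₁.natDegree ∨ 0 < γ₂.natDegree ∨ 0 < γ₃.natDegree ∨ 0 < γ₄.natDegree)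
    (heq : γ₁ ^ k + γ₂ ^ l + γ₃ ^ m + γ₄ ^ k = C N) :
    γ₁ ^ k + γ₄ ^ k = 0 ∨ γ₂ ^ l + γ₃ ^ m = 0 ∨
    γ₁ ^ k + γ₂ ^ l + γ₄ ^ k = 0 ∨ γ₁ ^ k + γ₃ ^ m + γ₄ ^ k = 0 :=
  lines_conics_in_subvarieties_general k l m hk13 hkodd hkl hlm hm N hN γ₁ γ₂ γ₃ γ₄
    hd₁ hd₂ hd₃ hd₄ hnc heq
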